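/- arXiv:1305.3831 — 3 statements merged into one kernel-verified Lean document; each statement's English description precedes it below -/
import Mathlib

section
/- Let S be a numerical semigroup and x an irreducible element of S, and write S^x = S \ {x}. Then for every y ∈ ℕ with y ≠ 0: d_{S^x}(y) = d_S(y) − 1 if y ≥ x and d_S(y − x) > 0, and d_{S^x}(y) = d_S(y) otherwise. -/
/-!
A number `z` has `d S z > 0` exactly when `z ∈ S`, since `0 ∈ S` gives the decomposition `0 + z`.
Removing `x` from `S` destroys the decompositions of `y` that involve `x`. There is only one
candidate, `x + (y - x)`, recorded in `decompSet S y` by its smaller part `min x (y - x)`, and it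
is a decomposition precisely when `x ≤ y` and `y - x ∈ S`.
-/

/-- A numerical semigroup: a set of naturals containing 0, closed under
addition, with finite complement. -/
def IsNumericalSemigroup (S : Set ℕ) : Prop :=
  0 ∈ S ∧ (∀ a ∈ S, ∀ b ∈ S, a + b ∈ S) ∧ Sᶜ.Finite

/-- The genus: cardinality of the complement. -/
noncomputable def genus (S : Set ℕ) : ℕ := Sᶜ.ncard

/-- The multiplicity: least nonzero element. -/
noncomputable def mult (S : Set ℕ) : ℕ := sInf {n | n ∈ S ∧ n ≠ 0}

open Classical in
/-- The conductor: 0 for ℕ itself, otherwise 1 + max of the complement. -/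
noncomputable def nsgConductor (S : Set ℕ) : ℕ := if S = Set.univ then 0 else sSup Sᶜ + 1

/-- Irreducible elements: nonzero elements not expressible as a sum of two
nonzero elements. -/
def Irr (S : Set ℕ) : Set ℕ :=
  {x | x ∈ S ∧ x ≠ 0 ∧ ¬ ∃ a ∈ S, ∃ b ∈ S, a ≠ 0 ∧ b ≠ 0 ∧ x = a + b}

/-- The decomposition set D_S(x). -/
def decompSet (S : Set ℕ) (x : ℕ) : Set ℕ :=
  {y | y ∈ S ∧ x - y ∈ S ∧ y ≤ x ∧ 2 * y ≤ x}

/-- The decomposition number d_S(x). -/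
noncomputable def d (S : Set ℕ) (x : ℕ) : ℕ := (decompSet S x).ncard


theorem decompSet_finite (S : Set ℕ) (z : ℕ) : (decompSet S z).Finite :=
  (Set.finite_Iic z).subset fun _ h => h.2.2.1

theorem d_pos_iff {S : Set ℕ} (hS : IsNumericalSemigroup S) (z : ℕ) : 0 < d S z ↔ z ∈ S := by
  rw [d, Set.ncard_pos (decompSet_finite S z)]
  constructor
  · rintro ⟨a, ha, hb, hle, -⟩
    have h := hS.2.1 a ha _ hb
    rwa [Nat.add_sub_cancel' hle] at h
  · intro hz
    exact ⟨0, hS.1, by simpa using hz, by simp, by simp⟩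

theorem decompSet_diff_of_le {S : Set ℕ} {x y : ℕ} (hxy : x ≤ y) :
    decompSet (S \ {x}) y = decompSet S y \ {min x (y - x)} := by
  ext a
  simp only [decompSet, Set.mem_ofPred_eq, Set.mem_sdiff, Set.mem_singleton_iff]
  constructor
  · rintro ⟨⟨h1, h2⟩, ⟨h3, h4⟩, h5, h6⟩
    exact ⟨⟨h1, h3, h5, h6⟩, by omega⟩
  · rintro ⟨⟨h1, h3, h5, h6⟩, h⟩
    exact ⟨⟨h1, by omega⟩, ⟨h3, by omega⟩, h5, h6⟩

theorem min_mem_decompSet {S : Set ℕ} {x y : ℕ} (hx : x ∈ S) (hxy : x ≤ y) (hyx : y - x ∈ S) :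
    min x (y - x) ∈ decompSet S y := by
  rcases le_total x (y - x) with h | h
  · rw [min_eq_left h]
    exact ⟨hx, hyx, hxy, by omega⟩
  · rw [min_eq_right h]
    exact ⟨hyx, by rwa [Nat.sub_sub_self hxy], by omega, by omega⟩

theorem decompSet_diff_of_not {S : Set ℕ} {x y : ℕ} (h : ¬ (x ≤ y ∧ y - x ∈ S)) :
    decompSet (S \ {x}) y = decompSet S y := by
  ext a
  simp only [decompSet, Set.mem_ofPred_eq, Set.mem_sdiff, Set.mem_singleton_iff]
  constructor
  · rintro ⟨⟨h1, -⟩, ⟨h3, -⟩, h5, h6⟩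
    exact ⟨h1, h3, h5, h6⟩
  · rintro ⟨h1, h3, h5, h6⟩
    refine ⟨⟨h1, ?_⟩, ⟨h3, ?_⟩, h5, h6⟩
    · rintro rfl
      exact h ⟨h5, h3⟩
    · rintro rfl
      exact h ⟨by omega, by rwa [Nat.sub_sub_self h5]⟩

/-- Update rule for the decomposition numbers when removing an irreducible
element x from S. -/
theorem stmt_15 (S : Set ℕ) (hS : IsNumericalSemigroup S) (x : ℕ)
    (hx : x ∈ Irr S) (y : ℕ) (hy : y ≠ 0) :
    (x ≤ y ∧ 0 < d S (y - x) → d (S \ {x}) y = d S y - 1) ∧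
    (¬ (x ≤ y ∧ 0 < d S (y - x)) → d (S \ {x}) y = d S y) := by
  rw [d_pos_iff hS]
  refine ⟨fun ⟨hxy, hyx⟩ => ?_, fun h => ?_⟩
  · rw [d, d, decompSet_diff_of_le hxy,
      Set.ncard_sdiff_singleton_of_mem (min_mem_decompSet hx.1 hxy hyx)]
  · rw [d, d, decompSet_diff_of_not h]
end

section
/- Let G ∈ ℕ and let S and T be numerical semigroups with g(S) ≤ G and g(T) ≤ G. If d_S(i) = d_T(i) for every i ∈ [0, 3G], then S = T. In other words, a numerical semigroup of genus at most G is entirely determined by the tuple (d_S(0), …, d_S(3G)). -/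
lemma mem_iff_d_ne_zero {S : Set ℕ} (hS : IsNumericalSemigroup S) (x : ℕ) :
    x ∈ S ↔ d S x ≠ 0 := by
  obtain ⟨h0, hadd, -⟩ := hS
  have hfin : (decompSet S x).Finite :=
    (Set.finite_Iic x).subset fun y hy => hy.2.2.1
  rw [d, ← Nat.pos_iff_ne_zero, Set.ncard_pos hfin]
  constructor
  · intro hx
    exact ⟨0, h0, by simpa using hx, by omega, by omega⟩
  · rintro ⟨y, hy, hxy, hle, -⟩
    have hsum := hadd y hy _ hxy
    rwa [Nat.add_sub_cancel' hle] at hsum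

lemma succ_le_two_mul_genus {S : Set ℕ} (hS : IsNumericalSemigroup S) {n : ℕ} (hn : n ∉ S) :
    n + 1 ≤ 2 * genus S := by
  obtain ⟨-, hadd, hfin⟩ := hS
  -- `[0, n]` is covered by the gaps and their reflections under `a ↦ n - a`.
  have hcover : Set.Iic n ⊆ Sᶜ ∪ (fun a => n - a) '' Sᶜ := by
    intro a ha
    have ha' : a ≤ n := ha
    by_cases haS : a ∈ S
    · refine Or.inr ⟨n - a, fun hna => hn ?_, by simp; omega⟩
      have hsum := hadd a haS _ hna
      rwa [Nat.add_sub_cancel' ha'] at hsum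
    · exact Or.inl haS
  have hcard := Set.ncard_le_ncard hcover (hfin.union (hfin.image _))
  have hunion := Set.ncard_union_le Sᶜ ((fun a => n - a) '' Sᶜ)
  have himage := Set.ncard_image_le (f := fun a => n - a) hfin
  have hIic : (Set.Iic n).ncard = n + 1 := by
    rw [← Finset.coe_Iic, Set.ncard_coe_finset, Nat.card_Iic]
  unfold genus
  omega

/-- A numerical semigroup of genus at most G is determined by the tuple
(d_S(0), ..., d_S(3G)). -/
theorem stmt_18 (G : ℕ) (S T : Set ℕ) (hS : IsNumericalSemigroup S)
    (hT : IsNumericalSemigroup T) (hgS : genus S ≤ G) (hgT : genus T ≤ G)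
    (h : ∀ i ≤ 3 * G, d S i = d T i) : S = T := by
  ext x
  by_cases hx : x ≤ 3 * G
  · rw [mem_iff_d_ne_zero hS, mem_iff_d_ne_zero hT, h x hx]
  · have hxS : x ∈ S := by
      by_contra hxS
      have := succ_le_two_mul_genus hS hxS
      omega
    have hxT : x ∈ T := by
      by_contra hxT
      have := succ_le_two_mul_genus hT hxT
      omega
    exact iff_of_true hxS hxT
end

section
/- Let S be a numerical semigroup and x an irreducible element of S with x ≥ c(S), and write S^x = S \ {x}. Then c(S^x) = x + 1, g(S^x) = g(S) + 1, and m(S^x) = m(S) if x > m(S) while m(S^x) = m(S) + 1 if x = m(S). Moreover, the number of such x, i.e. the cardinality of Irr(S) ∩ [c(S), ∞), is at most m(S). -/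
/-- Every natural number from the conductor on belongs to the semigroup. -/
lemma mem_of_nsgConductor_le {S : Set ℕ} (hS : IsNumericalSemigroup S) {y : ℕ}
    (hy : nsgConductor S ≤ y) : y ∈ S := by
  by_contra h
  have hne : S ≠ Set.univ := fun h' => h (h' ▸ Set.mem_univ y)
  have hle : y ≤ sSup Sᶜ := le_csSup hS.2.2.bddAbove h
  rw [nsgConductor, if_neg hne] at hy
  omega

lemma mult_spec {S : Set ℕ} {x : ℕ} (hx : x ∈ S) (hx0 : x ≠ 0) :
    mult S ∈ S ∧ mult S ≠ 0 :=
  Nat.sInf_mem (s := {n | n ∈ S ∧ n ≠ 0}) ⟨x, hx, hx0⟩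

lemma mult_le {S : Set ℕ} {y : ℕ} (hy : y ∈ S) (hy0 : y ≠ 0) : mult S ≤ y :=
  Nat.sInf_le (s := {n | n ∈ S ∧ n ≠ 0}) ⟨hy, hy0⟩

lemma mult_eq {S : Set ℕ} {k : ℕ} (hk : k ∈ S) (hk0 : k ≠ 0)
    (hmin : ∀ y ∈ S, y ≠ 0 → k ≤ y) : mult S = k :=
  le_antisymm (mult_le hk hk0) (hmin _ (mult_spec hk hk0).1 (mult_spec hk hk0).2)

lemma compl_diff_singleton (S : Set ℕ) (x : ℕ) : (S \ {x})ᶜ = insert x Sᶜ := by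
  ext y
  simp only [Set.mem_compl_iff, Set.mem_sdiff, Set.mem_singleton_iff, Set.mem_insert_iff]
  tauto

/-- The lower end is `max c 1` rather than `c` because of the case `S = ℕ`, where `c = 0` and the
irreducible element `1` equals `c + m`. -/
lemma irr_inter_subset {S : Set ℕ} (hS : IsNumericalSemigroup S) :
    Irr S ∩ {y | nsgConductor S ≤ y} ⊆
      Set.Ico (max (nsgConductor S) 1) (max (nsgConductor S) 1 + mult S) := by
  rintro y ⟨⟨hyS, hy0, hirr⟩, hyc⟩
  simp only [Set.mem_ofPred_eq] at hyc
  refine ⟨by omega, ?_⟩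
  by_contra! hlt
  obtain ⟨hmS, hm0⟩ := mult_spec hyS hy0
  exact hirr ⟨mult S, hmS, y - mult S, mem_of_nsgConductor_le hS (by omega), hm0,
    by omega, by omega⟩

/-- For an irreducible x ≥ c(S): the nsgConductor, genus and multiplicity of
S \ {x}, and the bound on the number of such x. -/
theorem stmt_19 (S : Set ℕ) (hS : IsNumericalSemigroup S) (x : ℕ)
    (hx : x ∈ Irr S) (hxc : nsgConductor S ≤ x) :
    nsgConductor (S \ {x}) = x + 1 ∧
    genus (S \ {x}) = genus S + 1 ∧
    (x > mult S → mult (S \ {x}) = mult S) ∧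
    (x = mult S → mult (S \ {x}) = mult S + 1) ∧
    (Irr S ∩ {y | nsgConductor S ≤ y}).ncard ≤ mult S := by
  obtain ⟨hxS, hx0, -⟩ := hx
  obtain ⟨hmS, hm0⟩ := mult_spec hxS hx0
  refine ⟨?_, ?_, fun hlt => ?_, fun heq => ?_, ?_⟩
  · have hne : S \ {x} ≠ Set.univ := fun h => (h ▸ Set.mem_univ x : x ∈ S \ {x}).2 rfl
    have hgreatest : IsGreatest (insert x Sᶜ) x := by
      refine ⟨Set.mem_insert _ _, ?_⟩
      rintro y (rfl | hy)
      · exact le_rfl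
      · by_contra! hlt
        exact hy (mem_of_nsgConductor_le hS (by omega))
    rw [nsgConductor, if_neg hne, compl_diff_singleton, hgreatest.csSup_eq]
  · rw [genus, genus, compl_diff_singleton,
      Set.ncard_insert_of_notMem (Set.notMem_compl_iff.mpr hxS) hS.2.2]
  · exact mult_eq ⟨hmS, hlt.ne⟩ hm0 fun y hy hy0 => mult_le hy.1 hy0
  · refine mult_eq ⟨mem_of_nsgConductor_le hS (by omega), ?_⟩ (by omega) fun y hy hy0 => ?_
    · rw [Set.mem_singleton_iff]
      omega
    · have hle := mult_le hy.1 hy0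
      have hyx : y ≠ x := hy.2
      omega
  · calc (Irr S ∩ {y | nsgConductor S ≤ y}).ncard
        ≤ (Set.Ico (max (nsgConductor S) 1) (max (nsgConductor S) 1 + mult S)).ncard :=
          Set.ncard_le_ncard (irr_inter_subset hS) (Set.finite_Ico _ _)
      _ = mult S := by
          rw [← Finset.coe_Ico, Set.ncard_coe_finset, Nat.card_Ico]
          omega
end
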